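/- Let γ>1, let U_l, U_r be states with v_l, v_r > 0, and let 0 < a < 1. Then there exists c_* > 0 such that every state U = (v,q₂,q₃,u₁,u₂,u₃) with 0 < v ≤ c_* satisfies η(U|U_l) > a·η(U|U_r). In other words, the set {U : v>0, η(U|U_l) ≤ a·η(U|U_r)} is contained in {U : v > c_*}. -/

import Mathlib

/-- The entropy `η(U) = v^(1-γ)/(γ-1) + ½(u₁²+u₂²+u₃²) + (q₂²+q₃²)/(2v)` of planar isentropic
MHD, in conservative variables `U = (v,q₂,q₃,u₁,u₂,u₃)`. -/
noncomputable def mhdEntropy (γ : ℝ) (U : Fin 6 → ℝ) : ℝ :=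
  (U 0) ^ (1 - γ) / (γ - 1) + (U 3 ^ 2 + U 4 ^ 2 + U 5 ^ 2) / 2 + (U 1 ^ 2 + U 2 ^ 2) / (2 * U 0)

/-- The gradient `∇η(U) = (−v^(−γ) − (q₂²+q₃²)/(2v²), q₂/v, q₃/v, u₁, u₂, u₃)`. -/
noncomputable def mhdEntropyGrad (γ : ℝ) (U : Fin 6 → ℝ) : Fin 6 → ℝ :=
  ![-(U 0) ^ (-γ) - (U 1 ^ 2 + U 2 ^ 2) / (2 * U 0 ^ 2), U 1 / U 0, U 2 / U 0, U 3, U 4, U 5]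

/-- The relative entropy `η(U|V) = η(U) − η(V) − ∇η(V)·(U − V)`. -/
noncomputable def mhdRelEntropy (γ : ℝ) (U V : Fin 6 → ℝ) : ℝ :=
  mhdEntropy γ U - mhdEntropy γ V - ∑ i : Fin 6, mhdEntropyGrad γ V i * (U i - V i)

/-!
As `v → 0⁺` the entropy grows faster than any affine function of the state, uniformly in the other
five coordinates: for `v ≤ 1` the kinetic and magnetic energies control half the squared length of
`U` up to a constant, which absorbs the linear term by Young's inequality, and the internal energy
`v^(1-γ)/(γ-1)` forces divergence. The difference `η(U|U_l) - a η(U|U_r)` is `(1 - a) η(U)` plus an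
affine function of `U`.
-/

open Filter Topology

theorem two_mul_dotProduct_le_dotProduct_self_add {ι R : Type*} [Fintype ι]
    [CommRing R] [LinearOrder R] [IsStrictOrderedRing R] (x y : ι → R) :
    2 * (x ⬝ᵥ y) ≤ x ⬝ᵥ x + y ⬝ᵥ y := by
  simp only [dotProduct, Finset.mul_sum, ← Finset.sum_add_distrib]
  exact Finset.sum_le_sum fun i _ => by
    simpa only [sq, mul_assoc] using two_mul_le_add_sq (x i) (y i)

/-- The filter of states whose specific volume `v = U 0` tends to `0⁺`, with no condition on the
other coordinates. Limits along it are therefore uniform in those coordinates. -/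
def vanishingVolume : Filter (Fin 6 → ℝ) :=
  comap (fun U => U 0) (𝓝[>] 0)

theorem eventually_vanishingVolume_iff {P : (Fin 6 → ℝ) → Prop} :
    (∀ᶠ U in vanishingVolume, P U) ↔ ∃ c > 0, ∀ U, 0 < U 0 → U 0 ≤ c → P U := by
  simpa only [vanishingVolume, gt_iff_lt, Set.mem_preimage, Set.mem_Ioc, and_imp] using
    ((nhdsGT_basis_Ioc (0 : ℝ)).comap fun U : Fin 6 → ℝ => U 0).eventually_iff

theorem rpow_div_add_dotProduct_self_le_mhdEntropy (γ : ℝ) {U : Fin 6 → ℝ}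
    (hv₀ : 0 < U 0) (hv₁ : U 0 ≤ 1) :
    U 0 ^ (1 - γ) / (γ - 1) + U ⬝ᵥ U / 2 ≤ mhdEntropy γ U + 1 / 2 := by
  have magnetic : (U 1 ^ 2 + U 2 ^ 2) / 2 ≤ (U 1 ^ 2 + U 2 ^ 2) / (2 * U 0) := by
    gcongr
    linarith
  have volume : U 0 ^ 2 ≤ 1 := pow_le_one₀ hv₀.le hv₁
  simp only [mhdEntropy, dotProduct, Fin.sum_univ_six]
  linarith

theorem rpow_div_sub_le_mhdEntropy_sub_dotProduct (γ : ℝ) (p : Fin 6 → ℝ) {U : Fin 6 → ℝ}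
    (hv₀ : 0 < U 0) (hv₁ : U 0 ≤ 1) :
    U 0 ^ (1 - γ) / (γ - 1) - (p ⬝ᵥ p + 1) / 2 ≤ mhdEntropy γ U - p ⬝ᵥ U := by
  linarith [rpow_div_add_dotProduct_self_le_mhdEntropy γ hv₀ hv₁,
    two_mul_dotProduct_le_dotProduct_self_add p U]

theorem tendsto_mhdEntropy_sub_dotProduct_atTop {γ : ℝ} (hγ : 1 < γ) (p : Fin 6 → ℝ) :
    Tendsto (fun U => mhdEntropy γ U - p ⬝ᵥ U) vanishingVolume atTop := by
  have internal_energy :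
      Tendsto (fun U : Fin 6 → ℝ => U 0 ^ (1 - γ) / (γ - 1)) vanishingVolume atTop :=
    ((tendsto_rpow_neg_nhdsGT_zero (by linarith)).comp tendsto_comap).atTop_div_const (by linarith)
  refine tendsto_atTop_mono' _ ?_
    (tendsto_atTop_add_const_right _ (-((p ⬝ᵥ p + 1) / 2)) internal_energy)
  exact eventually_vanishingVolume_iff.2
    ⟨1, one_pos, fun _ => rpow_div_sub_le_mhdEntropy_sub_dotProduct γ p⟩

theorem mhdRelEntropy_eq_sub_dotProduct_add (γ : ℝ) (U V : Fin 6 → ℝ) :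
    mhdRelEntropy γ U V =
      mhdEntropy γ U - mhdEntropyGrad γ V ⬝ᵥ U
        + (mhdEntropyGrad γ V ⬝ᵥ V - mhdEntropy γ V) := by
  have gradient_term : ∑ i, mhdEntropyGrad γ V i * (U i - V i) =
      mhdEntropyGrad γ V ⬝ᵥ U - mhdEntropyGrad γ V ⬝ᵥ V := dotProduct_sub _ U V
  rw [mhdRelEntropy, gradient_term]
  ring

theorem tendsto_mhdRelEntropy_sub_mul_atTop {γ a : ℝ} (hγ : 1 < γ) (ha : a < 1)
    (Ul Ur : Fin 6 → ℝ) :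
    Tendsto (fun U => mhdRelEntropy γ U Ul - a * mhdRelEntropy γ U Ur) vanishingVolume atTop := by
  have hb : 0 < 1 - a := sub_pos.2 ha
  let p : Fin 6 → ℝ := (1 - a)⁻¹ • (mhdEntropyGrad γ Ul - a • mhdEntropyGrad γ Ur)
  let C : ℝ := (mhdEntropyGrad γ Ul ⬝ᵥ Ul - mhdEntropy γ Ul)
    - a * (mhdEntropyGrad γ Ur ⬝ᵥ Ur - mhdEntropy γ Ur)
  have affine_decomposition (U : Fin 6 → ℝ) :
      mhdRelEntropy γ U Ul - a * mhdRelEntropy γ U Ur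
        = (1 - a) * (mhdEntropy γ U - p ⬝ᵥ U) + C := by
    simp only [mhdRelEntropy_eq_sub_dotProduct_add, p, C, smul_dotProduct, sub_dotProduct,
      smul_eq_mul, mul_sub, mul_inv_cancel_left₀ hb.ne']
    ring
  simp only [affine_decomposition]
  exact tendsto_atTop_add_const_right _ C
    ((tendsto_mhdEntropy_sub_dotProduct_atTop hγ p).const_mul_atTop hb)

/-- For `γ > 1`, states `U_l, U_r` with `v_l, v_r > 0` and `0 < a < 1`, there is
`c_* > 0` such that every state `U` with `0 < v ≤ c_*` satisfies `η(U|U_l) > a·η(U|U_r)`;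
i.e. the set `{U : v > 0, η(U|U_l) ≤ a·η(U|U_r)}` is contained in `{U : v > c_*}`. -/
theorem mhd_relative_entropy_small_volume
    (γ a : ℝ) (hγ : 1 < γ) (ha0 : 0 < a) (ha1 : a < 1)
    (Ul Ur : Fin 6 → ℝ) (hvl : 0 < Ul 0) (hvr : 0 < Ur 0) :
    ∃ cstar : ℝ, 0 < cstar ∧
      ∀ U : Fin 6 → ℝ, 0 < U 0 → U 0 ≤ cstar →
        a * mhdRelEntropy γ U Ur < mhdRelEntropy γ U Ul := by
  have eventually_pos :
      ∀ᶠ U in vanishingVolume, 0 < mhdRelEntropy γ U Ul - a * mhdRelEntropy γ U Ur :=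
    (tendsto_mhdRelEntropy_sub_mul_atTop hγ ha1 Ul Ur).eventually_gt_atTop 0
  simpa only [sub_pos] using eventually_vanishingVolume_iff.1 eventually_pos
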